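/- Let F be a field, H the t×n Hankel matrix in x_1,...,x_{n+t-1} with t ≤ n, and R = F[x_1,...,x_{n+t-1}]/I_t(H). Then the multiplicity of R is e(R) = binomial(n, t-1), and the a-invariant of R is a(R) = 1-t. -/

import Mathlib

set_option synthInstance.maxHeartbeats 1000000
set_option maxHeartbeats 1000000

open MvPolynomial Matrix PowerSeries

/-!
Call a monomial in `x_0, …, x_{n+t-2}` standard if its support is covered by fewer than `t` blocks
`{c, c + 1}` of adjacent positions; a greedy left-to-right covering is optimal. The standard
monomials form a basis of the Hankel determinantal ring:

* If a monomial is not standard, the diagonal term of some maximal minor divides it. By the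
  rearrangement inequality this term has the largest quadratic weight `∑ i, i ^ 2 * α i` in the
  minor, so the monomial can be rewritten modulo the minor in terms of smaller weight.
* The map `x_i ↦ ∑_{j < t - 1} y_j s_j ^ i` factors the Hankel matrix through rank `t - 1` and so
  kills the minors. On polynomials with standard support it is injective: for a monomial of largest
  quadratic weight, assign each variable to the block containing it. Convexity of `i ↦ i ^ 2` shows
  that no other monomial of the polynomial and no other assignment contribute to the resulting term.

Splitting off the first variable or the first block gives a recursion for the generating function of
the standard monomials, which the numerators `∑_{i < t} C(n - t + i, i) z ^ i` solve.
-/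

/-! ### Greedy coverings by blocks -/

/-- The size of a greedy left-to-right covering of the support of a tuple by blocks `{c, c + 1}` of
two adjacent positions. A monomial with exponent `α` is divisible by the diagonal term of some
maximal minor of the `t`-rowed Hankel matrix if and only if `t ≤ blockCount α`. -/
def blockCount : {N : ℕ} → (Fin N → ℕ) → ℕ
  | 0, _ => 0
  | 1, α => if α 0 = 0 then 0 else 1
  | _ + 2, α =>
    if α 0 = 0 then blockCount (Fin.tail α) else blockCount (Fin.tail (Fin.tail α)) + 1

section BlockCount

variable {N : ℕ}

lemma two_mul_blockCount_le (α : Fin N → ℕ) : 2 * blockCount α ≤ N + 1 := by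
  induction α using blockCount.induct <;> simp only [blockCount, *, if_true, if_false] <;> omega

lemma blockCount_eq_zero_iff (α : Fin N → ℕ) : blockCount α = 0 ↔ α = 0 := by
  induction α using blockCount.induct with
  | case1 α => simp [blockCount, Subsingleton.elim α 0]
  | case2 α h0 | case3 α h0 => simp [blockCount, funext_iff, h0]
  | case4 _ α h0 ih =>
    simp [blockCount, ih, funext_iff, h0, Fin.forall_fin_succ, Fin.tail]
  | case5 _ α h0 => simp [blockCount, funext_iff, h0, Fin.forall_fin_succ]

lemma strictMono_finCons {β : Type*} [Preorder β] {n : ℕ} {f : Fin n → β} {a : β}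
    (hf : StrictMono f) (ha : ∀ k, a < f k) : StrictMono (Fin.cons a f : Fin (n + 1) → β) := by
  refine Fin.cases (Fin.cases (absurd · (lt_irrefl _)) fun j _ => ha j)
    fun i => Fin.cases (fun h => absurd h (Fin.not_lt_zero _)) fun j h => ?_
  exact hf (Fin.succ_lt_succ_iff.1 h)

lemma exists_diagonal_of_le_blockCount {α : Fin N → ℕ} {t : ℕ} (ht : t ≤ blockCount α) :
    ∃ b : Fin t → ℕ, StrictMono b ∧
      ∀ k, b k + t ≤ N ∧ ∃ i : Fin N, (i : ℕ) = k + b k ∧ α i ≠ 0 := by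
  induction α using blockCount.induct generalizing t with
  | case1 α | case2 α h0 =>
    obtain rfl : t = 0 := by simpa [blockCount, *] using ht
    exact ⟨Fin.elim0, Subsingleton.strictMono _, fun k => k.elim0⟩
  | case3 α h0 =>
    have ht' : t ≤ 1 := by simpa [blockCount, h0] using ht
    have : Subsingleton (Fin t) := Fin.subsingleton_iff_le_one.2 ht'
    refine ⟨0, Subsingleton.strictMono _, fun k => ⟨by simpa using ht', 0, ?_, h0⟩⟩
    simp only [Fin.val_zero, Pi.zero_apply]
    omega
  | case4 _ α h0 ih =>
    obtain ⟨b, hb, hα⟩ := ih (t := t) (by simpa [blockCount, h0] using ht)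
    refine ⟨fun k => b k + 1, hb.add_const 1, fun k => ?_⟩
    obtain ⟨hk, i, hi, hαi⟩ := hα k
    dsimp only
    exact ⟨by omega, i.succ, by rw [Fin.val_succ]; omega, hαi⟩
  | case5 _ α h0 ih =>
    rcases t with _ | t
    · exact ⟨Fin.elim0, Subsingleton.strictMono _, fun k => k.elim0⟩
    have ht' : t ≤ blockCount (Fin.tail (Fin.tail α)) := by simpa [blockCount, h0] using ht
    obtain ⟨b, hb, hα⟩ := ih ht'
    refine ⟨Fin.cons 0 fun k => b k + 1, ?_, Fin.cases ?_ fun k => ?_⟩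
    · exact strictMono_finCons (hb.add_const 1) fun k => Nat.succ_pos _
    · have := two_mul_blockCount_le (Fin.tail (Fin.tail α))
      exact ⟨by rw [Fin.cons_zero]; omega, 0, by simp, h0⟩
    · obtain ⟨hk, i, hi, hαi⟩ := hα k
      simp only [Fin.cons_succ, Fin.val_succ]
      exact ⟨by omega, i.succ.succ, by simp only [Fin.val_succ]; omega, hαi⟩

lemma exists_blocks_of_blockCount_le {α : Fin N → ℕ} {r : ℕ} (hr : blockCount α ≤ r) :
    ∃ b : Fin r → ℕ, StrictMono b ∧
      ∀ i, α i ≠ 0 → ∃ j, (i : ℕ) ∈ Set.Icc (j + b j) (j + b j + 1) := by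
  simp only [Set.mem_Icc]
  induction α using blockCount.induct generalizing r with
  | case1 α => exact ⟨Fin.val, Fin.val_strictMono, fun i => i.elim0⟩
  | case2 α h0 =>
    exact ⟨Fin.val, Fin.val_strictMono, fun i hi => absurd (Subsingleton.elim i 0 ▸ h0) hi⟩
  | case3 α h0 =>
    have : 1 ≤ r := by simpa [blockCount, h0] using hr
    exact ⟨Fin.val, Fin.val_strictMono, fun i _ => ⟨⟨0, this⟩, by simp⟩⟩
  | case4 _ α h0 ih =>
    obtain ⟨b, hb, hα⟩ := ih (r := r) (by simpa [blockCount, h0] using hr)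
    refine ⟨fun j => b j + 1, hb.add_const 1, Fin.cases (absurd h0) fun i hi => ?_⟩
    obtain ⟨j, hj⟩ := hα i hi
    exact ⟨j, by simp only [Fin.val_succ]; omega⟩
  | case5 _ α h0 ih =>
    rcases r with _ | r
    · simp [blockCount, h0] at hr
    obtain ⟨b, hb, hα⟩ := ih (r := r) (by simpa [blockCount, h0] using hr)
    refine ⟨Fin.cons 0 fun j => b j + 1,
      strictMono_finCons (hb.add_const 1) fun j => Nat.succ_pos _,
      Fin.cases (fun _ => ⟨0, by simp⟩) (Fin.cases (fun _ => ⟨0, by simp⟩) fun i hi => ?_)⟩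
    obtain ⟨j, hj⟩ := hα i hi
    exact ⟨j.succ, by simp only [Fin.val_succ, Fin.cons_succ]; omega⟩

lemma pairwise_disjoint_blocks {r : ℕ} {b : Fin r → ℕ} (hb : StrictMono b) :
    Pairwise (Function.onFun Disjoint fun j : Fin r => Set.Icc (j + b j) (j + b j + 1)) := by
  intro j k hjk
  refine Set.disjoint_left.2 fun i => ?_
  simp only [Set.mem_Icc]
  rcases lt_or_gt_of_ne hjk with h | h
  · have := hb h; omega
  · have := hb h; omega

end BlockCount

/-! ### The secant parametrization -/

section Secant

lemma det_mul_eq_zero_of_card_lt {R m n : Type*} [CommRing R] [Fintype m] [DecidableEq m]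
    [Fintype n] (h : Fintype.card n < Fintype.card m) (A : Matrix m n R) (B : Matrix n m R) :
    (A * B).det = 0 := by
  classical
  obtain ⟨k, hk⟩ := Nat.exists_eq_add_of_lt h
  let e : m ≃ n ⊕ Fin (k + 1) := Fintype.equivOfCardEq (by simp [hk, add_assoc])
  have hAB : A * B = (fromCols A (0 : Matrix m (Fin (k + 1)) R)).submatrix id e *
      (fromRows B (0 : Matrix (Fin (k + 1)) m R)).submatrix e id := by
    rw [submatrix_mul_equiv, fromCols_mul_fromRows, Matrix.mul_zero, add_zero, submatrix_id_id]
  rw [hAB, det_mul, det_eq_zero_of_column_eq_zero (e.symm (Sum.inr 0)) (by simp), zero_mul]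

variable {J : Type*} {N : ℕ}

/-- The exponent of the monomial `y_j * s_j ^ i`, where `y_j` and `s_j` are the variables indexed by
`Sum.inl j` and `Sum.inr j`. -/
noncomputable def secantExponent (j : J) (i : ℕ) : J ⊕ J →₀ ℕ :=
  Finsupp.single (Sum.inl j) 1 + Finsupp.single (Sum.inr j) i

/-- The substitution `x_i ↦ ∑ j, y_j * s_j ^ i`, which parametrizes the variety swept out by the
linear spans of `J`-many points of the rational normal curve. -/
noncomputable def secantMap (R : Type*) [CommRing R] (N : ℕ) (J : Type*) [Fintype J] :
    MvPolynomial (Fin N) R →ₐ[R] MvPolynomial (J ⊕ J) R :=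
  aeval fun i => ∑ j, MvPolynomial.monomial (secantExponent j i) 1

/-- The quadratic weight `∑ i, i ^ 2 * α i` of an exponent. -/
noncomputable def quadraticWeight : (Fin N →₀ ℕ) →+ ℕ :=
  Finsupp.weight fun i : Fin N => (i : ℕ) ^ 2

/-- The exponent of the term of the image of `x ^ α` under `secantMap` obtained by choosing the
summand `g l` in the factor `l`. The factors of `x ^ α` are indexed by `Σ i, Fin (α i)`. -/
noncomputable def assignmentExponent {α : Fin N →₀ ℕ} (g : (Σ i, Fin (α i)) → J) : J ⊕ J →₀ ℕ :=
  ∑ l, secantExponent (g l) l.1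

lemma secantMap_monomial (R : Type*) [CommRing R] [Fintype J] (α : Fin N →₀ ℕ) :
    secantMap R N J (MvPolynomial.monomial α 1) =
      ∑ g : (Σ i, Fin (α i)) → J, MvPolynomial.monomial (assignmentExponent g) 1 := by
  classical
  have hprod :
      ∏ i : Fin N, (∑ j : J, MvPolynomial.monomial (secantExponent j (i : ℕ)) (1 : R)) ^ α i =
        ∏ l : Σ i : Fin N, Fin (α i),
          ∑ j : J, MvPolynomial.monomial (secantExponent j (l.1 : ℕ)) (1 : R) := by
    simp [Fintype.prod_sigma]
  rw [secantMap, aeval_monomial, map_one, one_mul,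
    Finsupp.prod_fintype _ _ fun i => pow_zero _, hprod, Fintype.prod_sum]
  simp only [assignmentExponent, monomial_sum_one]

lemma sum_sigma_fin {ι M : Type*} [Fintype ι] [AddCommMonoid M] (α : ι → ℕ) (f : ι → M) :
    ∑ l : Σ i, Fin (α i), f l.1 = ∑ i, α i • f i := by
  simp [Fintype.sum_sigma]

lemma cast_quadraticWeight (α : Fin N →₀ ℕ) :
    (quadraticWeight α : ℤ) = ∑ l : Σ i, Fin (α i), (l.1 : ℤ) ^ 2 := by
  rw [sum_sigma_fin α fun i => (i : ℤ) ^ 2, quadraticWeight, Finsupp.weight_eq_sum]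
  simp

lemma weight_assignmentExponent (p q : J → ℤ) {α : Fin N →₀ ℕ} (g : (Σ i, Fin (α i)) → J) :
    Finsupp.weight (Sum.elim p q) (assignmentExponent g) =
      ∑ l, (p (g l) + q (g l) * l.1) := by
  simp [assignmentExponent, secantExponent, Finsupp.weight_single, mul_comm]

/-- The linear interpolation of `x ^ 2` at `x = c` and `x = c + 1`. -/
def parabolaChord (c x : ℤ) : ℤ :=
  -(c * (c + 1)) + (2 * c + 1) * x

lemma parabolaChord_le_sq (c x : ℤ) : parabolaChord c x ≤ x ^ 2 := by
  rw [parabolaChord]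
  linarith [Int.le_self_sq (x - c)]

lemma parabolaChord_eq_sq_iff {c x : ℤ} : parabolaChord c x = x ^ 2 ↔ x = c ∨ x = c + 1 := by
  rw [eq_comm, ← sub_eq_zero,
    show x ^ 2 - parabolaChord c x = (x - c) * (x - (c + 1)) by rw [parabolaChord]; ring,
    mul_eq_zero, sub_eq_zero, sub_eq_zero]

lemma sum_parabolaChord_eq_weight (c : J → ℕ) {α : Fin N →₀ ℕ} (g : (Σ i, Fin (α i)) → J) :
    ∑ l, parabolaChord (c (g l)) l.1 =
      Finsupp.weight (Sum.elim (fun j => -((c j : ℤ) * (c j + 1))) fun j => 2 * (c j : ℤ) + 1)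
        (assignmentExponent g) := by
  simp only [weight_assignmentExponent, parabolaChord]

variable {c : J → ℕ} {α α' : Fin N →₀ ℕ} {g : (Σ i, Fin (α i)) → J} {g' : (Σ i, Fin (α' i)) → J}

lemma mem_block_of_quadraticWeight_le (hgg' : assignmentExponent g = assignmentExponent g')
    (hg' : ∀ l, (l.1 : ℕ) ∈ Set.Icc (c (g' l)) (c (g' l) + 1))
    (hW : quadraticWeight α ≤ quadraticWeight α') (l : Σ i, Fin (α i)) :
    (l.1 : ℕ) ∈ Set.Icc (c (g l)) (c (g l) + 1) := by
  have hsum : ∑ l, parabolaChord (c (g l)) l.1 = ∑ l : Σ i, Fin (α i), (l.1 : ℤ) ^ 2 := by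
    refine le_antisymm (Finset.sum_le_sum fun l _ => parabolaChord_le_sq _ _) ?_
    calc ∑ l : Σ i, Fin (α i), (l.1 : ℤ) ^ 2
        ≤ ∑ l : Σ i, Fin (α' i), (l.1 : ℤ) ^ 2 := by
          rw [← cast_quadraticWeight, ← cast_quadraticWeight]
          exact_mod_cast hW
      _ = ∑ l, parabolaChord (c (g' l)) l.1 := by
          refine Finset.sum_congr rfl fun l _ => (parabolaChord_eq_sq_iff.2 ?_).symm
          have := hg' l
          rw [Set.mem_Icc] at this
          omega
      _ = ∑ l, parabolaChord (c (g l)) l.1 := by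
          rw [sum_parabolaChord_eq_weight, ← hgg', sum_parabolaChord_eq_weight]
  have hl := (Finset.sum_eq_sum_iff_of_le fun l _ => parabolaChord_le_sq (c (g l)) l.1).1 hsum l
    (Finset.mem_univ l)
  have := parabolaChord_eq_sq_iff.1 hl
  rw [Set.mem_Icc]
  omega

lemma exists_add_mul_eq (c : ℕ) (f : ℕ → ℤ) :
    ∃ p q : ℤ, ∀ i ∈ Set.Icc c (c + 1), p + q * i = f i := by
  refine ⟨f c - (f (c + 1) - f c) * c, f (c + 1) - f c, fun i hi => ?_⟩
  obtain rfl | rfl : i = c ∨ i = c + 1 := by rw [Set.mem_Icc] at hi; omega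
  · ring
  · push_cast
    ring

lemma eq_of_assignmentExponent_eq (hgg' : assignmentExponent g = assignmentExponent g')
    (hg : ∀ l, (l.1 : ℕ) ∈ Set.Icc (c (g l)) (c (g l) + 1))
    (hg' : ∀ l, (l.1 : ℕ) ∈ Set.Icc (c (g' l)) (c (g' l) + 1)) : α = α' := by
  ext i₀
  choose p q hpq using fun j => exists_add_mul_eq (c j) fun i => if i = i₀ then 1 else 0
  have hcount {α : Fin N →₀ ℕ} {g : (Σ i, Fin (α i)) → J}
      (hg : ∀ l, (l.1 : ℕ) ∈ Set.Icc (c (g l)) (c (g l) + 1)) :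
      (α i₀ : ℤ) = Finsupp.weight (Sum.elim p q) (assignmentExponent g) := by
    rw [weight_assignmentExponent, Finset.sum_congr rfl fun l _ => hpq _ _ (hg l),
      sum_sigma_fin α fun i => if (i : ℕ) = i₀ then (1 : ℤ) else 0]
    simp [Fin.val_inj]
  exact_mod_cast (hcount hg).trans (hgg' ▸ (hcount hg').symm)

variable [Fintype J] (R : Type*) [CommRing R]

lemma coeff_secantMap_monomial
    (hc : Pairwise (Function.onFun Disjoint fun j => Set.Icc (c j) (c j + 1)))
    (hg' : ∀ l, (l.1 : ℕ) ∈ Set.Icc (c (g' l)) (c (g' l) + 1))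
    (hW : quadraticWeight α ≤ quadraticWeight α') :
    MvPolynomial.coeff (assignmentExponent g') (secantMap R N J (MvPolynomial.monomial α 1)) =
      if α = α' then 1 else 0 := by
  classical
  simp only [secantMap_monomial, coeff_sum, MvPolynomial.coeff_monomial]
  split_ifs with hα
  · subst hα
    rw [Finset.sum_eq_single g' _ (by simp), if_pos rfl]
    intro g _ hne
    refine if_neg fun hgg' => hne <| funext fun l => hc.eq ?_
    exact Set.not_disjoint_iff.2 ⟨l.1, mem_block_of_quadraticWeight_le hgg' hg' le_rfl l, hg' l⟩
  · refine Finset.sum_eq_zero fun g _ => if_neg fun hgg' => hα ?_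
    exact eq_of_assignmentExponent_eq hgg' (mem_block_of_quadraticWeight_le hgg' hg' hW) hg'

lemma eq_zero_of_secantMap_eq_zero {R : Type*} [CommRing R] {N r : ℕ} {f : MvPolynomial (Fin N) R}
    (hf : ∀ α ∈ f.support, blockCount α ≤ r) (h0 : secantMap R N (Fin r) f = 0) : f = 0 := by
  by_contra hne
  obtain ⟨α', hα', hmax⟩ := Finset.exists_max_image f.support quadraticWeight
    (support_nonempty.2 hne)
  obtain ⟨b, hb, hcover⟩ := exists_blocks_of_blockCount_le (hf α' hα')
  have hfactor (l : Σ i, Fin (α' i)) : α' l.1 ≠ 0 := (Fin.pos l.2).ne'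
  choose g' hg' using fun l : Σ i, Fin (α' i) => hcover l.1 (hfactor l)
  have hcoeff : MvPolynomial.coeff (assignmentExponent g') (secantMap R N (Fin r) f) =
      MvPolynomial.coeff α' f := by
    conv_lhs => rw [← support_sum_monomial_coeff f]
    have hterm : ∀ α ∈ f.support, MvPolynomial.coeff (assignmentExponent g')
        (secantMap R N (Fin r) (MvPolynomial.monomial α (MvPolynomial.coeff α f))) =
          if α = α' then MvPolynomial.coeff α f else 0 := fun α hα => by
      rw [← mul_one (MvPolynomial.coeff α f), ← smul_eq_mul, ← smul_monomial, map_smul,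
        MvPolynomial.coeff_smul, coeff_secantMap_monomial R (pairwise_disjoint_blocks hb) hg'
          (hmax α hα)]
      simp
    rw [map_sum, coeff_sum, Finset.sum_congr rfl hterm,
      Finset.sum_ite_eq' _ α' fun α => MvPolynomial.coeff α f, if_pos hα']
  rw [h0, MvPolynomial.coeff_zero] at hcoeff
  exact mem_support_iff.1 hα' hcoeff.symm

end Secant

/-! ### Straightening -/

section Straightening

lemma sum_mul_comp_perm_lt {ι α : Type*} [LinearOrder ι] [Fintype ι] [Semiring α] [LinearOrder α]
    [IsStrictOrderedRing α] [ExistsAddOfLE α] {f g : ι → α} (hf : StrictMono f) (hg : StrictMono g)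
    {σ : Equiv.Perm ι} (hσ : σ ≠ 1) : ∑ k, f k * g (σ k) < ∑ k, f k * g k := by
  refine (hf.monotone.monovary hg.monotone).sum_mul_comp_perm_lt_sum_mul_iff.2 fun h => hσ ?_
  have hmono : StrictMono σ := fun i j hij =>
    (σ.injective.ne hij.ne).lt_of_le <| le_of_not_gt fun hji =>
      (hf hij).not_ge (h (hg hji))
  have hid : ⇑σ = id := (hmono.range_inj strictMono_id).1 (by simp [σ.surjective.range_eq])
  exact DFunLike.coe_injective hid

variable {t n : ℕ}

/-- The position `a + b` of the variable in entry `(a, b)` of the `t × n` Hankel matrix. -/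
def hankelIndex (a : Fin t) (b : Fin n) : Fin (n + t - 1) :=
  ⟨a + b, by omega⟩

/-- The generic `t × n` Hankel matrix. -/
noncomputable def hankelMatrix (R : Type*) [CommRing R] (t n : ℕ) :
    Matrix (Fin t) (Fin n) (MvPolynomial (Fin (n + t - 1)) R) :=
  of fun a b => MvPolynomial.X (hankelIndex a b)

/-- The ideal `I_t` of maximal minors of the generic `t × n` Hankel matrix. The columns selected by
`g` may repeat, which only adds zero minors. -/
noncomputable def hankelIdeal (R : Type*) [CommRing R] (t n : ℕ) :
    Ideal (MvPolynomial (Fin (n + t - 1)) R) :=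
  Ideal.span (Set.range fun g : Fin t → Fin n => ((hankelMatrix R t n).submatrix id g).det)

/-- The exponent of the term belonging to `σ` in the Leibniz expansion of the maximal minor of the
Hankel matrix on the columns `b`. -/
noncomputable def minorExponent (b : Fin t → Fin n) (σ : Equiv.Perm (Fin t)) :
    Fin (n + t - 1) →₀ ℕ :=
  ∑ k, Finsupp.single (hankelIndex (σ k) (b k)) 1

lemma degree_minorExponent (b : Fin t → Fin n) (σ : Equiv.Perm (Fin t)) :
    (minorExponent b σ).degree = t := by
  simp [minorExponent]

lemma quadraticWeight_minorExponent (b : Fin t → Fin n) (σ : Equiv.Perm (Fin t)) :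
    quadraticWeight (minorExponent b σ) =
      ∑ k : Fin t, (k : ℕ) ^ 2 + ∑ k, (b k : ℕ) ^ 2 + 2 * ∑ k, (b k : ℕ) * (σ k : ℕ) := by
  rw [← Equiv.sum_comp σ fun k => (k : ℕ) ^ 2, Finset.mul_sum, ← Finset.sum_add_distrib,
    ← Finset.sum_add_distrib]
  simp only [minorExponent, quadraticWeight, map_sum, Finsupp.weight_single, hankelIndex, one_smul]
  exact Finset.sum_congr rfl fun k _ => by ring

lemma quadraticWeight_minorExponent_lt {b : Fin t → Fin n} (hb : StrictMono b)
    {σ : Equiv.Perm (Fin t)} (hσ : σ ≠ 1) :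
    quadraticWeight (minorExponent b σ) < quadraticWeight (minorExponent b 1) := by
  have := sum_mul_comp_perm_lt (Fin.val_strictMono.comp hb) Fin.val_strictMono hσ
  simp only [quadraticWeight_minorExponent, Equiv.Perm.one_apply, Function.comp_apply] at this ⊢
  omega

lemma sum_single_one_le {ι κ : Type*} [Fintype ι] {f : ι → κ} (hf : Function.Injective f)
    {α : κ →₀ ℕ} (hα : ∀ k, α (f k) ≠ 0) : ∑ k, Finsupp.single (f k) 1 ≤ α := by
  classical
  intro i
  rw [Finsupp.finsetSum_apply]
  simp only [Finsupp.single_apply, Finset.sum_boole, Nat.cast_id]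
  rcases Finset.eq_empty_or_nonempty ({k | f k = i} : Finset ι) with h | ⟨k, hk⟩
  · simp [h]
  · obtain rfl := (Finset.mem_filter.1 hk).2
    exact (Finset.card_le_one.2 fun a ha b hb => hf (by simp_all)).trans
      (Nat.one_le_iff_ne_zero.2 (hα k))

lemma exists_minorExponent_le {α : Fin (n + t - 1) →₀ ℕ} (ht : t ≤ blockCount α) :
    ∃ b : Fin t → Fin n, StrictMono b ∧ minorExponent b 1 ≤ α := by
  obtain ⟨b, hb, hα⟩ := exists_diagonal_of_le_blockCount ht
  let b' (k : Fin t) : Fin n := ⟨b k, by have := (hα k).1; have := k.pos; omega⟩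
  have hb' : StrictMono b' := hb
  refine ⟨b', hb', sum_single_one_le ?_ fun k => ?_⟩
  · refine StrictMono.injective (β := Fin (n + t - 1)) fun k l hkl => ?_
    exact Fin.lt_def.2 (add_lt_add hkl (hb hkl))
  · obtain ⟨-, i, hi, hαi⟩ := hα k
    rwa [show hankelIndex ((1 : Equiv.Perm (Fin t)) k) (b' k) = i from Fin.ext hi.symm]

variable (R : Type*) [CommRing R]

lemma det_hankelMatrix_submatrix (b : Fin t → Fin n) :
    ((hankelMatrix R t n).submatrix id b).det =
      ∑ σ : Equiv.Perm (Fin t),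
        Equiv.Perm.sign σ • MvPolynomial.monomial (minorExponent b σ) 1 := by
  simp only [det_apply, minorExponent, monomial_sum_one, submatrix_apply, id, hankelMatrix,
    of_apply, MvPolynomial.X]

lemma monomial_mem_restrictSupport_sup_hankelIdeal {d : ℕ} (α : Fin (n + t - 1) →₀ ℕ)
    (hα : α.degree = d) :
    MvPolynomial.monomial α (1 : R) ∈
      restrictSupport R {α | blockCount α < t ∧ α.degree = d} ⊔
        (hankelIdeal R t n).restrictScalars R := by
  induction hw : quadraticWeight α using Nat.strong_induction_on generalizing α with
  | _ w ih =>
  obtain hlt | hle := lt_or_ge (blockCount α) t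
  · exact Submodule.mem_sup_left ((monomial_mem_restrictSupport R).2 (.inl ⟨hlt, hα⟩))
  obtain ⟨b, hb, hbα⟩ := exists_minorExponent_le hle
  obtain ⟨ρ, rfl⟩ := exists_add_of_le hbα
  have hminor : MvPolynomial.monomial ρ 1 * ((hankelMatrix R t n).submatrix id b).det ∈
      hankelIdeal R t n :=
    Ideal.mul_mem_left _ _ (Ideal.subset_span ⟨b, rfl⟩)
  have hexpand : MvPolynomial.monomial (minorExponent b 1 + ρ) (1 : R) =
      MvPolynomial.monomial ρ 1 * ((hankelMatrix R t n).submatrix id b).det -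
        ∑ σ ∈ Finset.univ.erase (1 : Equiv.Perm (Fin t)),
          Equiv.Perm.sign σ • MvPolynomial.monomial (minorExponent b σ + ρ) (1 : R) := by
    rw [det_hankelMatrix_submatrix, Finset.mul_sum,
      ← Finset.add_sum_erase _ _ (Finset.mem_univ (1 : Equiv.Perm (Fin t)))]
    simp [mul_smul_comm, MvPolynomial.monomial_mul, add_comm ρ]
  rw [hexpand]
  refine Submodule.sub_mem _ (Submodule.mem_sup_right hminor) (Submodule.sum_mem _ fun σ hσ => ?_)
  refine Submodule.smul_of_tower_mem _ (Equiv.Perm.sign σ : ℤ) (ih _ ?_ _ ?_ rfl)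
  · rw [← hw, map_add, map_add]
    exact Nat.add_lt_add_right (quadraticWeight_minorExponent_lt hb (Finset.ne_of_mem_erase hσ)) _
  · simpa only [map_add, degree_minorExponent] using hα

lemma secantMap_eq_zero_of_mem_hankelIdeal {J : Type*} [Fintype J] (hJ : Fintype.card J < t)
    {f : MvPolynomial (Fin (n + t - 1)) R} (hf : f ∈ hankelIdeal R t n) :
    secantMap R (n + t - 1) J f = 0 := by
  suffices h : hankelIdeal R t n ≤ RingHom.ker (secantMap R (n + t - 1) J) from h hf
  rw [hankelIdeal, Ideal.span_le]
  rintro _ ⟨g, rfl⟩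
  let A : Matrix (Fin t) J (MvPolynomial (J ⊕ J) R) :=
    of fun a j => MvPolynomial.monomial (secantExponent j a) 1
  let B : Matrix J (Fin t) (MvPolynomial (J ⊕ J) R) :=
    of fun j b => MvPolynomial.monomial (Finsupp.single (Sum.inr j) (g b : ℕ)) 1
  have hAB : (secantMap R (n + t - 1) J).mapMatrix ((hankelMatrix R t n).submatrix id g) =
      A * B := by
    ext1 a b
    simp [A, B, Matrix.mul_apply, hankelMatrix, hankelIndex, secantMap, secantExponent,
      MvPolynomial.monomial_mul, Finsupp.single_add, add_assoc]
  rw [SetLike.mem_coe, RingHom.mem_ker, AlgHom.map_det, hAB,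
    det_mul_eq_zero_of_card_lt (by simpa using hJ)]

end Straightening

/-! ### Counting standard monomials -/

section GeneratingFunctions

lemma sum_antidiagonalTuple_succ {M : Type*} [AddCommMonoid M] (N k : ℕ)
    (f : (Fin (N + 1) → ℕ) → M) :
    ∑ x ∈ Finset.Nat.antidiagonalTuple (N + 1) k, f x =
      ∑ p ∈ Finset.HasAntidiagonal.antidiagonal k, ∑ y ∈ Finset.Nat.antidiagonalTuple N p.2,
        f (Fin.cons p.1 y) := by
  change ((List.Nat.antidiagonalTuple (N + 1) k).map f).sum =
    ((List.Nat.antidiagonal k).map fun p =>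
      ((List.Nat.antidiagonalTuple N p.2).map fun y => f (Fin.cons p.1 y)).sum).sum
  simp [List.Nat.antidiagonalTuple, List.flatMap_def, List.sum_flatten, Function.comp_def]

/-- The generating function of a set `S` of `N`-tuples of natural numbers: its `k`-th coefficient is
the number of tuples in `S` with sum `k`. -/
noncomputable def sumSeries {N : ℕ} (S : Set (Fin N → ℕ)) : ℚ⟦X⟧ :=
  PowerSeries.mk fun k => ∑ x ∈ Finset.Nat.antidiagonalTuple N k, S.indicator 1 x

variable {N : ℕ}

lemma natCard_degree_eq (S : Set (Fin N → ℕ)) (k : ℕ) :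
    (Nat.card {α : Fin N →₀ ℕ | ⇑α ∈ S ∧ α.degree = k} : ℚ) =
      PowerSeries.coeff k (sumSeries S) := by
  classical
  rw [sumSeries, PowerSeries.coeff_mk]
  simp only [Set.indicator_apply, Pi.one_apply, Finset.sum_boole]
  rw [← Nat.card_eq_finsetCard]
  congr 1
  refine Nat.card_congr (Equiv.subtypeEquiv Finsupp.equivFunOnFinite fun α => ?_)
  simp only [Set.mem_ofPred_eq, Finset.mem_filter, Finset.Nat.mem_antidiagonalTuple,
    Finsupp.degree_eq_sum, Finsupp.equivFunOnFinite_apply]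
  exact and_comm

lemma sumSeries_cons_succ {S : Set (Fin (N + 1) → ℕ)} {S₀ T : Set (Fin N → ℕ)}
    (hS₀ : ∀ y, Fin.cons 0 y ∈ S ↔ y ∈ S₀) (hT : ∀ a y, Fin.cons (a + 1) y ∈ S ↔ y ∈ T) :
    sumSeries S = sumSeries S₀ + PowerSeries.X * (PowerSeries.mk 1 * sumSeries T) := by
  classical
  ext k
  simp only [sumSeries, PowerSeries.coeff_mk, map_add, sum_antidiagonalTuple_succ]
  cases k with
  | zero => simp [Set.indicator_apply, hS₀]
  | succ k =>
    rw [Finset.Nat.sum_antidiagonal_succ, PowerSeries.coeff_succ_X_mul, PowerSeries.coeff_mul]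
    simp [Set.indicator_apply, hS₀, hT]

lemma sumSeries_cons {S : Set (Fin (N + 1) → ℕ)} {T : Set (Fin N → ℕ)}
    (hT : ∀ a y, Fin.cons a y ∈ S ↔ y ∈ T) :
    sumSeries S = PowerSeries.mk 1 * sumSeries T := by
  rw [sumSeries_cons_succ (hT 0) fun a => hT (a + 1)]
  linear_combination -sumSeries T * PowerSeries.mk_one_mul_one_sub_eq_one ℚ

lemma sumSeries_univ : sumSeries (Set.univ : Set (Fin N → ℕ)) = PowerSeries.mk 1 ^ N := by
  induction N with
  | zero =>
    ext k
    cases k <;> simp [sumSeries, PowerSeries.coeff_one]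
  | succ N ih => rw [sumSeries_cons (T := Set.univ) (by simp), ih, pow_succ']

lemma sumSeries_singleton_zero : sumSeries ({0} : Set (Fin N → ℕ)) = 1 := by
  ext k
  simp only [sumSeries, PowerSeries.coeff_mk, PowerSeries.coeff_one]
  cases k with
  | zero => simp [Finset.Nat.antidiagonalTuple_zero_right]
  | succ k =>
    refine Finset.sum_eq_zero fun x hx => Set.indicator_of_notMem ?_ _
    rintro rfl
    simp [Finset.Nat.mem_antidiagonalTuple] at hx

/-- The generating function, by degree, of the standard monomials in `N` variables: those with at
most `r` blocks. -/
noncomputable def blockSeries (N r : ℕ) : ℚ⟦X⟧ :=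
  sumSeries {x : Fin N → ℕ | blockCount x ≤ r}

lemma blockSeries_zero_right (N : ℕ) : blockSeries N 0 = 1 := by
  simp [blockSeries, blockCount_eq_zero_iff, sumSeries_singleton_zero]

lemma blockSeries_of_le {r : ℕ} (h : N ≤ 2 * r) : blockSeries N r = PowerSeries.mk 1 ^ N := by
  rw [← sumSeries_univ, blockSeries]
  congr 1
  refine Set.eq_univ_of_forall fun x => ?_
  have := two_mul_blockCount_le x
  simp only [Set.mem_ofPred_eq]
  omega

lemma blockSeries_succ_succ (N r : ℕ) :
    blockSeries (N + 2) (r + 1) = blockSeries (N + 1) (r + 1) +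
      PowerSeries.X * (PowerSeries.mk 1 * (PowerSeries.mk 1 * blockSeries N r)) := by
  have hpos : sumSeries {y : Fin (N + 1) → ℕ | blockCount (Fin.tail y) ≤ r} =
      PowerSeries.mk 1 * blockSeries N r :=
    sumSeries_cons fun a y => by simp
  rw [← hpos]
  exact sumSeries_cons_succ (fun y => by simp [blockCount]) fun a y => by simp [blockCount]

/-- The numerator `∑_{i ≤ r} C(s + i - 1, i) z ^ i` of the Hilbert series of the Hankel
determinantal ring with `t = r + 1` and `n = r + s`. -/
noncomputable def hilbertNumerator (r s : ℕ) : Polynomial ℚ :=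
  ∑ i ∈ Finset.range (r + 1), Polynomial.monomial i (Nat.multichoose s i : ℚ)

lemma coeff_hilbertNumerator (r s i : ℕ) :
    (hilbertNumerator r s).coeff i = if i < r + 1 then (Nat.multichoose s i : ℚ) else 0 := by
  simp [hilbertNumerator, Polynomial.coeff_monomial]

lemma hilbertNumerator_zero_left (s : ℕ) : hilbertNumerator 0 s = 1 := by
  simp [hilbertNumerator]

lemma hilbertNumerator_zero_right (r : ℕ) : hilbertNumerator r 0 = 1 := by
  ext i
  rw [coeff_hilbertNumerator]
  cases i <;> simp [Polynomial.coeff_one]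

lemma hilbertNumerator_succ_succ (r s : ℕ) :
    hilbertNumerator (r + 1) (s + 1) =
      hilbertNumerator (r + 1) s + Polynomial.X * hilbertNumerator r (s + 1) := by
  ext i
  cases i with
  | zero => simp [coeff_hilbertNumerator]
  | succ i =>
    simp only [coeff_hilbertNumerator, Polynomial.coeff_add, Polynomial.coeff_X_mul,
      add_lt_add_iff_right, Nat.multichoose_succ_succ, Nat.cast_add]
    split_ifs <;> simp

lemma eval_one_hilbertNumerator (r s : ℕ) :
    (hilbertNumerator r s).eval 1 = ((r + s).choose r : ℚ) := by
  simp only [hilbertNumerator, Polynomial.eval_finsetSum, Polynomial.eval_monomial, one_pow,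
    mul_one]
  rw [← Nat.cast_sum, Nat.sum_range_multichoose, Nat.choose_symm_add]

lemma natDegree_hilbertNumerator {r s : ℕ} (hs : 0 < s) :
    (hilbertNumerator r s).natDegree = r := by
  refine Polynomial.natDegree_eq_of_le_of_coeff_ne_zero ?_ ?_
  · rw [Polynomial.natDegree_le_iff_coeff_eq_zero]
    intro i hi
    rw [coeff_hilbertNumerator, if_neg (by omega)]
  · rw [coeff_hilbertNumerator, if_pos r.lt_succ_self, Nat.multichoose_eq, Nat.cast_ne_zero]
    exact (Nat.choose_pos (by omega)).ne'

theorem blockSeries_mul_one_sub_X_pow (r s : ℕ) :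
    blockSeries (2 * r + s) r * (1 - PowerSeries.X) ^ (2 * r) =
      (hilbertNumerator r s : ℚ⟦X⟧) := by
  have hgeom : (PowerSeries.mk 1 : ℚ⟦X⟧) * (1 - PowerSeries.X) = 1 :=
    PowerSeries.mk_one_mul_one_sub_eq_one ℚ
  induction r generalizing s with
  | zero => simp [blockSeries_zero_right, hilbertNumerator_zero_left]
  | succ r ihr =>
    induction s with
    | zero =>
      rw [add_zero, blockSeries_of_le le_rfl, hilbertNumerator_zero_right, ← mul_pow, hgeom,
        one_pow, Polynomial.coe_one]
    | succ s ihs =>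
      have hrec := blockSeries_succ_succ (2 * r + (s + 1)) r
      rw [show 2 * r + (s + 1) + 2 = 2 * (r + 1) + (s + 1) by ring,
        show 2 * r + (s + 1) + 1 = 2 * (r + 1) + s by ring] at hrec
      rw [hrec, hilbertNumerator_succ_succ, Polynomial.coe_add, Polynomial.coe_mul,
        Polynomial.coe_X, ← ihs, ← ihr]
      linear_combination PowerSeries.X * blockSeries (2 * r + (s + 1)) r *
        (1 - PowerSeries.X) ^ (2 * r) * (PowerSeries.mk 1 * (1 - PowerSeries.X) + 1) * hgeom

end GeneratingFunctions

/-! ### The Hilbert series -/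

section HilbertSeries

variable {σ R : Type*} [CommRing R]

lemma finrank_map_homogeneousSubmodule [Nontrivial R] {I : Ideal (MvPolynomial σ R)} {d : ℕ}
    {S : Set (σ →₀ ℕ)} (hdeg : ∀ α ∈ S, α.degree = d)
    (hspan : ∀ α : σ →₀ ℕ, α.degree = d →
      MvPolynomial.monomial α (1 : R) ∈ restrictSupport R S ⊔ I.restrictScalars R)
    (hindep : Disjoint (restrictSupport R S) (I.restrictScalars R)) :
    Module.finrank R (Submodule.map (Ideal.Quotient.mkₐ R I).toLinearMap
      (homogeneousSubmodule σ R d)) = Nat.card S := by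
  have hker : LinearMap.ker (Ideal.Quotient.mkₐ R I).toLinearMap = I.restrictScalars R := by
    ext f
    simp [Ideal.Quotient.eq_zero_iff_mem]
  have hmap : Submodule.map (Ideal.Quotient.mkₐ R I).toLinearMap (homogeneousSubmodule σ R d) =
      Submodule.map (Ideal.Quotient.mkₐ R I).toLinearMap (restrictSupport R S) := by
    rw [homogeneousSubmodule_eq_finsupp_supported]
    change Submodule.map _ (restrictSupport R {α : σ →₀ ℕ | α.degree = d}) = _
    refine le_antisymm ?_ (Submodule.map_mono (restrictSupport_mono R hdeg))
    rw [Submodule.map_le_iff_le_comap, Submodule.comap_map_eq, hker, restrictSupport_eq_span,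
      Submodule.span_le]
    rintro _ ⟨α, hα, rfl⟩
    exact hspan α hα
  rw [hmap, ← LinearMap.range_domRestrict, LinearMap.finrank_range_of_inj,
    Module.finrank_eq_nat_card_basis (basisRestrictSupport R S)]
  rwa [← LinearMap.ker_eq_bot, LinearMap.ker_domRestrict, hker,
    ← Submodule.disjoint_iff_comap_eq_bot]

/-- The Hilbert series of `R[x_σ] / I`; the coefficients live in `ℚ` so that it can be multiplied by
powers of `1 - z`. -/
noncomputable def hilbertSeries (I : Ideal (MvPolynomial σ R)) : ℚ⟦X⟧ :=
  PowerSeries.mk fun k => (Module.finrank R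
    (Submodule.map (Ideal.Quotient.mkₐ R I).toLinearMap (homogeneousSubmodule σ R k)) : ℚ)

lemma hilbertSeries_hankelIdeal (R : Type*) [CommRing R] [Nontrivial R] (r n : ℕ) :
    hilbertSeries (hankelIdeal R (r + 1) n) = blockSeries (n + (r + 1) - 1) r := by
  ext k
  have hindep : Disjoint
      (restrictSupport R {α : Fin (n + (r + 1) - 1) →₀ ℕ | blockCount α < r + 1 ∧ α.degree = k})
      ((hankelIdeal R (r + 1) n).restrictScalars R) :=
    Submodule.disjoint_def.2 fun f hf hfI =>
      eq_zero_of_secantMap_eq_zero (fun α hα => Nat.lt_succ_iff.1 (hf hα).1)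
        (secantMap_eq_zero_of_mem_hankelIdeal R (by simp) hfI)
  rw [hilbertSeries, PowerSeries.coeff_mk, blockSeries, ← natCard_degree_eq,
    finrank_map_homogeneousSubmodule (fun α hα => hα.2)
      (monomial_mem_restrictSupport_sup_hankelIdeal R) hindep]
  simp only [Nat.lt_succ_iff, Set.mem_ofPred_eq]

end HilbertSeries

theorem hankel_multiplicity_a_invariant_general (R : Type*) [CommRing R] [Nontrivial R] (t n : ℕ)
    (ht : 1 ≤ t) (htn : t ≤ n) :
    ∃ h : Polynomial ℚ,
      (h : PowerSeries ℚ) =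
        hilbertSeries (hankelIdeal R t n) * (1 - PowerSeries.X) ^ (2 * t - 2) ∧
      h.eval 1 = Nat.choose n (t - 1) ∧
      h.natDegree = t - 1 := by
  obtain ⟨r, rfl⟩ := Nat.exists_eq_add_of_le' ht
  obtain ⟨s, rfl⟩ := Nat.exists_eq_add_of_le htn
  refine ⟨hilbertNumerator r (s + 1), ?_, ?_, natDegree_hilbertNumerator s.succ_pos⟩
  · rw [hilbertSeries_hankelIdeal, ← blockSeries_mul_one_sub_X_pow]
    congr 2
    omega
  · rw [eval_one_hilbertNumerator, add_tsub_cancel_right, add_right_comm, add_assoc]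

/-- For the `t×n` Hankel determinantal ring `R = F[x_1,...,x_{n+t-1}]/I_t(H)` (with `t ≤ n`),
the multiplicity is `e(R) = C(n, t-1)` and the `a`-invariant is `a(R) = 1-t`.  This is encoded
via the Hilbert series: if `HS(z) = Σ_k dim_F R_k z^k`, then `HS(z)·(1-z)^{2t-2}` is a
polynomial `h` with `h(1) = e(R) = C(n, t-1)` and `deg h = t-1`, the latter being equivalent to
`a(R) = deg h - (2t-2) = 1-t`. -/
theorem hankel_multiplicity_a_invariant (F : Type*) [Field F] (t n : ℕ) (ht : 2 ≤ t)
    (htn : t ≤ n)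
    (H : Matrix (Fin t) (Fin n) (MvPolynomial (Fin (n + t - 1)) F))
    (hH : ∀ a b, H a b = X ⟨(a : ℕ) + (b : ℕ), by have := a.2; have := b.2; omega⟩)
    (I : Ideal (MvPolynomial (Fin (n + t - 1)) F))
    (hI : I = Ideal.span (Set.range fun g : Fin t → Fin n => (H.submatrix id g).det))
    (HS : PowerSeries ℚ)
    (hHS : HS = PowerSeries.mk fun k => (Module.finrank F
      (Submodule.map (Ideal.Quotient.mkₐ F I).toLinearMap
        (homogeneousSubmodule (Fin (n + t - 1)) F k)) : ℚ)) :
    ∃ h : Polynomial ℚ,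
      (h : PowerSeries ℚ) = HS * (1 - PowerSeries.X) ^ (2 * t - 2) ∧
      h.eval 1 = Nat.choose n (t - 1) ∧
      h.natDegree = t - 1 := by
  obtain rfl : H = hankelMatrix F t n := Matrix.ext hH
  subst hI hHS
  exact hankel_multiplicity_a_invariant_general F t n (by omega) htn
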